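/- Virasoro cocycle classification with normalization: Let K : ℤ×ℤ → ℂ satisfy K(m,n) = −K(n,m) for all m, n ∈ ℤ and the cocycle identity (m−n)K(m+n,p) + (n−p)K(n+p,m) + (p−m)K(p+m,n) = 0 for all m, n, p ∈ ℤ. If moreover K(0,m) = 0 for all m ∈ ℤ and K(1,−1) = 0, then there exists c ∈ ℂ such that K(m,n) = (c/12)(m³ − m)·δ_{m+n,0} for all m, n ∈ ℤ. -/

import Mathlib

/-!
Taking one argument of the cocycle identity to be `0` expresses `(m + n) • K m n` through
`K 0 (m + n)`, so the normalization `K 0 _ = 0` kills `K` off the antidiagonal. Taking it to be `1`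
gives a first-order recursion for `K m (-m)`, whose coefficient `m - 1` vanishes only at `m = 1`.
Hence `K 1 (-1)` and `K 2 (-2)` determine the antidiagonal: the recursion is solved by a combination
of `m` and `m ^ 3`, and the values at `1` and `2` fix the coefficients.
-/

/-- Antisymmetric 2-cocycles of the Witt algebra with values in an abelian group, where `K m n` is
the value on the basis vectors `L m`, `L n`. Scalars are integers acting by `•`, so that no ring
structure on the values is required. -/
structure IsWittCocycle {A : Type*} [AddCommGroup A] (K : ℤ → ℤ → A) : Prop where
  antisymm : ∀ m n, K m n = -K n m
  jacobi : ∀ m n p,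
    (m - n) • K (m + n) p + (n - p) • K (n + p) m + (p - m) • K (p + m) n = 0

namespace IsWittCocycle

variable {A : Type*} [AddCommGroup A] {K : ℤ → ℤ → A}

theorem add_smul_eq (hK : IsWittCocycle K) (m n : ℤ) :
    (m + n) • K m n = (n - m) • K 0 (m + n) := by
  have jacobi_zero := hK.jacobi m n 0
  rw [add_zero, zero_add, hK.antisymm (m + n) 0, hK.antisymm n m] at jacobi_zero
  linear_combination (norm := module) -jacobi_zero

theorem sub_one_smul_antidiagonal_succ (hK : IsWittCocycle K) (m : ℤ) :
    (m - 1) • K (m + 1) (-(m + 1)) = (m + 2) • K m (-m) - (2 * m + 1) • K 1 (-1) := by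
  have jacobi_one := hK.jacobi m 1 (-(m + 1))
  rw [show 1 + -(m + 1) = -m by ring, show -(m + 1) + m = -1 by ring, hK.antisymm (-m) m,
    hK.antisymm (-1) 1] at jacobi_one
  linear_combination (norm := module) jacobi_one

variable [IsAddTorsionFree A]

theorem apply_self (hK : IsWittCocycle K) (m : ℤ) : K m m = 0 :=
  self_eq_neg.mp (hK.antisymm m m)

theorem eq_zero_of_add_ne_zero (hK : IsWittCocycle K) (h0 : ∀ m, K 0 m = 0) {m n : ℤ}
    (hmn : m + n ≠ 0) : K m n = 0 := by
  have h := hK.add_smul_eq m n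
  rw [h0, smul_zero] at h
  exact (smul_eq_zero_iff_right hmn).mp h

theorem six_smul_antidiagonal_of_two_le (hK : IsWittCocycle K) {m : ℤ} (hm : 2 ≤ m) :
    (6 : ℤ) • K m (-m) = (m ^ 3 - m) • K 2 (-2) + (8 * m - 2 * m ^ 3) • K 1 (-1) := by
  induction m, hm using Int.leInduction with
  | base => module
  | succ m hm ih =>
    have hm1 : m - 1 ≠ 0 := by lia
    apply zsmul_right_injective hm1
    linear_combination (norm := module)
      (6 : ℤ) • hK.sub_one_smul_antidiagonal_succ m + (m + 2) • ih

theorem six_smul_antidiagonal (hK : IsWittCocycle K) (m : ℤ) :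
    (6 : ℤ) • K m (-m) = (m ^ 3 - m) • K 2 (-2) + (8 * m - 2 * m ^ 3) • K 1 (-1) := by
  have of_nonneg (k : ℤ) (hk : 0 ≤ k) :
      (6 : ℤ) • K k (-k) = (k ^ 3 - k) • K 2 (-2) + (8 * k - 2 * k ^ 3) • K 1 (-1) := by
    obtain rfl | rfl | hk2 : k = 0 ∨ k = 1 ∨ 2 ≤ k := by lia
    · simp [hK.apply_self]
    · module
    · exact hK.six_smul_antidiagonal_of_two_le hk2
  obtain hm | hm := le_total 0 m
  · exact of_nonneg m hm
  · have h := of_nonneg (-m) (neg_nonneg.mpr hm)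
    rw [neg_neg, hK.antisymm] at h
    linear_combination (norm := module) -h

end IsWittCocycle

theorem stmt_3_general {A : Type*} [AddCommGroup A] [IsAddTorsionFree A] {K : ℤ → ℤ → A}
    (hK : IsWittCocycle K) (h0 : ∀ m, K 0 m = 0) (h1 : K 1 (-1) = 0) (m n : ℤ) :
    (6 : ℤ) • K m n = ((m ^ 3 - m) * if m + n = 0 then 1 else 0) • K 2 (-2) := by
  split_ifs with hmn
  · obtain rfl : n = -m := eq_neg_of_add_eq_zero_right hmn
    rw [hK.six_smul_antidiagonal, h1, smul_zero, add_zero, mul_one]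
  · rw [hK.eq_zero_of_add_ne_zero h0 hmn, smul_zero, mul_zero, zero_smul]

/-- Virasoro cocycle classification with normalization: an antisymmetric 2-cocycle
`K` on the Witt algebra with `K 0 m = 0` and `K 1 (-1) = 0` is the standard
Virasoro cocycle `(c/12)(m³ - m) δ_{m+n,0}` for some `c ∈ ℂ`. -/
theorem stmt_3 (K : ℤ → ℤ → ℂ)
    (hanti : ∀ m n : ℤ, K m n = - K n m)
    (hcoc : ∀ m n p : ℤ,
      ((m : ℂ) - n) * K (m + n) p + ((n : ℂ) - p) * K (n + p) m
        + ((p : ℂ) - m) * K (p + m) n = 0)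
    (h0 : ∀ m : ℤ, K 0 m = 0)
    (h1 : K 1 (-1) = 0) :
    ∃ c : ℂ, ∀ m n : ℤ,
      K m n = c / 12 * ((m : ℂ) ^ 3 - m) * (if m + n = 0 then 1 else 0) := by
  have hK : IsWittCocycle K := ⟨hanti, fun m n p => by simpa using hcoc m n p⟩
  refine ⟨2 * K 2 (-2), fun m n => ?_⟩
  have six_mul_eq := stmt_3_general hK h0 h1 m n
  simp only [zsmul_eq_mul] at six_mul_eq
  push_cast at six_mul_eq
  linear_combination six_mul_eq / 6
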